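/- arXiv:2510.27574 — 8 statements merged into one kernel-verified Lean document; each statement's English description precedes it below -/
import Mathlib

section
/- Let α = (a_1,…,a_n) be a Fubini ranking with n competitors. Then all n cars park under the parking process (i.e., α is a parking function), the set of lucky cars of α equals {i ∈ [n] : a_i ≠ a_j for all j < i} (the first occurrences of each value), and consequently the number of lucky cars of α equals the number of distinct values occurring among the entries of α. -/
/-- A Fubini ranking with `n` competitors: entries are in `[n]` (represented by `Fin n`,
where `i : Fin n` stands for the rank `i.val + 1`), and for every rank `r` occurring among
the entries, the number of indices `j` whose entry is strictly smaller than `r` equals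
`r - 1` (i.e. `r.val` in the `Fin n` encoding). -/
def IsFubini {n : ℕ} (α : Fin n → Fin n) : Prop :=
  ∀ r : Fin n, (∃ i, α i = r) →
    (Finset.univ.filter (fun j => α j < r)).card = (r : ℕ)

/-- The set of lucky cars of `α`: car `i` is lucky iff it is the first occurrence of its
value, i.e. `α j ≠ α i` for all `j < i`. -/
def luckySet {n : ℕ} (α : Fin n → Fin n) : Finset (Fin n) :=
  Finset.univ.filter (fun i => ∀ j, j < i → α j ≠ α i)

/-- The number of lucky cars of `α`. -/
def lucky {n : ℕ} (α : Fin n → Fin n) : ℕ := (luckySet α).card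

instance {n : ℕ} : DecidablePred (IsFubini (n := n)) := fun α =>
  inferInstanceAs (Decidable (∀ r : Fin n, (∃ i, α i = r) →
    (Finset.univ.filter (fun j => α j < r)).card = (r : ℕ)))

/-! In a Fubini ranking the number of entries smaller than an occurring rank `r` fixes where the
block of entries equal to `r` starts in the stable sort of `α` (by value, ties broken by index): it
starts at position `r` itself. Parking realises this stable sort: the cars preferring `r` fill their
block from left to right in order of arrival, so exactly the first of them is lucky. -/

section FirstOccurrence

open Finset

variable {ι β : Type*} [LinearOrder ι] [DecidableEq β]

theorem image_filter_forall_lt_ne (s : Finset ι) (f : ι → β) :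
    {i ∈ s | ∀ j ∈ s, j < i → f j ≠ f i}.image f = s.image f := by
  refine (image_subset_image (filter_subset _ s)).antisymm fun b hb => ?_
  obtain ⟨k, hk, rfl⟩ := mem_image.1 hb
  obtain ⟨i, hi, hmin⟩ :=
    exists_min_image {j ∈ s | f j = f k} id ⟨k, mem_filter.2 ⟨hk, rfl⟩⟩
  obtain ⟨his, hik⟩ := mem_filter.1 hi
  have hfirst : ∀ j ∈ s, j < i → f j ≠ f i := fun j hj hji hfj =>
    hji.not_ge (hmin j (mem_filter.2 ⟨hj, hfj.trans hik⟩))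
  exact mem_image.2 ⟨i, mem_filter.2 ⟨his, hfirst⟩, hik⟩

theorem injOn_filter_forall_lt_ne (s : Finset ι) (f : ι → β) :
    Set.InjOn f ({i ∈ s | ∀ j ∈ s, j < i → f j ≠ f i} : Finset ι) := by
  intro i hi j hj hij
  obtain ⟨his, hifirst⟩ := mem_filter.1 (mem_coe.1 hi)
  obtain ⟨hjs, hjfirst⟩ := mem_filter.1 (mem_coe.1 hj)
  rcases lt_trichotomy i j with hlt | heq | hgt
  · exact absurd hij (hjfirst i his hlt)
  · exact heq
  · exact absurd hij.symm (hifirst j hjs hgt)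

theorem card_filter_forall_lt_ne (s : Finset ι) (f : ι → β) :
    #{i ∈ s | ∀ j ∈ s, j < i → f j ≠ f i} = #(s.image f) := by
  rw [← image_filter_forall_lt_ne, card_image_of_injOn (injOn_filter_forall_lt_ne s f)]

end FirstOccurrence

section SortPosition

open Finset

variable {n : ℕ} {β : Type*} [LinearOrder β]

/-- The position of each index in the stable sort of `f`, as a permutation of `Fin n`. For a Fubini
ranking this is the outcome of the parking process. -/
def sortPosition (f : Fin n → β) : Equiv.Perm (Fin n) :=
  (Tuple.sort f).symm

theorem sortPosition_lt_sortPosition_iff {f : Fin n → β} {i j : Fin n} :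
    sortPosition f i < sortPosition f j ↔ f i < f j ∨ f i = f j ∧ i < j := by
  have hmono : StrictMono ((Tuple.sort f).trans (Tuple.graphEquiv₁ f)) :=
    Tuple.eq_sort_iff'.1 rfl
  rw [← hmono.lt_iff_lt]
  simp only [sortPosition, Equiv.trans_apply, Equiv.apply_symm_apply]
  exact Prod.Lex.toLex_lt_toLex

theorem sortPosition_lt_card_filter_lt_iff {f : Fin n → β} {a : β} {i : Fin n} :
    (sortPosition f i : ℕ) < #{j | f j < a} ↔ f i < a := by
  have hcard : #{k | (f ∘ Tuple.sort f) k < a} = #{j | f j < a} :=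
    card_equiv (Tuple.sort f) (by simp)
  rw [← hcard, Tuple.lt_card_lt_iff_apply_lt_of_monotone (Tuple.monotone_sort f)]
  simp [sortPosition]

end SortPosition

namespace IsFubini

variable {n : ℕ} {α : Fin n → Fin n}

theorem sortPosition_lt_apply_iff (hα : IsFubini α) {i j : Fin n} :
    sortPosition α j < α i ↔ α j < α i := by
  rw [Fin.lt_def, ← hα (α i) ⟨i, rfl⟩, sortPosition_lt_card_filter_lt_iff]

theorem apply_le_sortPosition_iff (hα : IsFubini α) {i j : Fin n} :
    α i ≤ sortPosition α j ↔ α i ≤ α j := by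
  simpa only [not_lt] using hα.sortPosition_lt_apply_iff.not

theorem apply_le_sortPosition (hα : IsFubini α) (i : Fin n) : α i ≤ sortPosition α i :=
  hα.apply_le_sortPosition_iff.2 le_rfl

theorem apply_le_sortPosition_and_lt_iff (hα : IsFubini α) {i j : Fin n} :
    α i ≤ sortPosition α j ∧ sortPosition α j < sortPosition α i ↔ α j = α i ∧ j < i := by
  rw [hα.apply_le_sortPosition_iff, sortPosition_lt_sortPosition_iff]
  constructor
  · rintro ⟨hle, hlt | htie⟩
    · exact absurd hlt hle.not_gt
    · exact htie
  · exact fun htie => ⟨htie.1.ge, Or.inr htie⟩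

theorem exists_lt_sortPosition_eq (hα : IsFubini α) {i s : Fin n} (his : α i ≤ s)
    (hsi : s < sortPosition α i) : ∃ j, j < i ∧ sortPosition α j = s := by
  obtain ⟨j, rfl⟩ := (sortPosition α).surjective s
  exact ⟨j, (hα.apply_le_sortPosition_and_lt_iff.1 ⟨his, hsi⟩).2, rfl⟩

theorem sortPosition_eq_apply_iff (hα : IsFubini α) (i : Fin n) :
    sortPosition α i = α i ↔ ∀ j, j < i → α j ≠ α i := by
  constructor
  · intro hlucky j hji heq
    obtain ⟨hle, hlt⟩ := hα.apply_le_sortPosition_and_lt_iff.2 ⟨heq, hji⟩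
    exact hle.not_gt (hlucky ▸ hlt)
  · intro hfirst
    by_contra hne
    have hlt : α i < sortPosition α i := (hα.apply_le_sortPosition i).lt_of_ne' hne
    obtain ⟨j, hj⟩ := (sortPosition α).surjective (α i)
    obtain ⟨heq, hji⟩ := hα.apply_le_sortPosition_and_lt_iff.1 ⟨hj.ge, hj.trans_lt hlt⟩
    exact hfirst j hji heq

theorem card_filter_sortPosition_eq_apply (hα : IsFubini α) :
    (Finset.univ.filter fun i => sortPosition α i = α i).card = (Finset.univ.image α).card := by
  simpa [hα.sortPosition_eq_apply_iff] using card_filter_forall_lt_ne Finset.univ α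

end IsFubini

/-- Every Fubini ranking is a parking function: there is an (injective)
outcome assignment `o` where car `i` parks at spot `o i`, the smallest unoccupied spot
`≥ α i` (every spot `s` with `α i ≤ s < o i` is occupied by an earlier car). Moreover a
car is lucky (parks in its preferred spot, `o i = α i`) iff it is the first occurrence of
its value, and hence the number of lucky cars equals the number of distinct values of `α`. -/
theorem fubini_parks_and_lucky_first_occurrences
    (n : ℕ) (hn : 1 ≤ n) (α : Fin n → Fin n) (hα : IsFubini α) :
    ∃ o : Fin n → Fin n, Function.Injective o ∧
      (∀ i : Fin n, α i ≤ o i ∧ ∀ s : Fin n, α i ≤ s → s < o i → ∃ j, j < i ∧ o j = s) ∧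
      (∀ i : Fin n, o i = α i ↔ ∀ j, j < i → α j ≠ α i) ∧
      (Finset.univ.filter (fun i => o i = α i)).card = (Finset.univ.image α).card := by
  exact ⟨sortPosition α, (sortPosition α).injective,
    fun i => ⟨hα.apply_le_sortPosition i, fun _ => hα.exists_lt_sortPosition_eq⟩,
    hα.sortPosition_eq_apply_iff, hα.card_filter_sortPosition_eq_apply⟩
end

section
/- For all n ≥ 1 and 1 ≤ k ≤ n, the number of Fubini rankings with n competitors having exactly k lucky cars equals k!·S(n,k), where S(n,k) is the Stirling number of the second kind. -/
/-- The Stirling number of the second kind `S(n,k)`: the number of partitions of an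
`n`-element set into `k` nonempty blocks. -/
noncomputable def stirling2 (n k : ℕ) : ℕ :=
  Nat.card {P : Finset (Finset (Fin n)) //
    P.card = k ∧ (∀ B ∈ P, B.Nonempty) ∧
      ∀ i : Fin n, ∃! B : Finset (Fin n), B ∈ P ∧ i ∈ B}

/-!
Ranking the competitors by an arbitrary surjective score function `Fin n → Fin k`, a lower score
being better, gives a Fubini ranking with `k` distinct ranks. Conversely, listing the `k` ranks of a
Fubini ranking in increasing order recovers the score function, since a strictly increasing map out
of `Fin k` is determined by its range. So the rankings to be counted correspond to the surjections
`Fin n → Fin k`, and a surjection is the same thing as its kernel, a partition of `Fin n`, together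
with a labelling of the `k` blocks by `Fin k`, for which there are always `k!` choices.
-/

open Function Finset

section CompetitionRank

variable {ι κ μ : Type*} [Fintype ι]

/-- The rank of a score `c` in the competition where `i` scores `f i` and low scores win: the number
of competitors strictly ahead of `c`. It is counted from `0`, as in `IsFubini`. -/
def competitionRank [Preorder κ] [DecidableLT κ] (f : ι → κ) (c : κ) : ℕ :=
  #{i | f i < c}

lemma competitionRank_lt_card [Preorder κ] [DecidableLT κ] (f : ι → κ) (i : ι) :
    competitionRank f (f i) < Fintype.card ι :=
  card_lt_univ_of_notMem (x := i) (by simp)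

lemma strictMonoOn_competitionRank [Preorder κ] [DecidableLT κ] (f : ι → κ) :
    StrictMonoOn (competitionRank f) (Set.range f) := by
  rintro _ ⟨i, rfl⟩ d - hid
  refine card_lt_card (ssubset_iff_of_subset ?_ |>.2 ⟨i, by simpa using hid, by simp⟩)
  exact monotone_filter_right _ fun _ _ hj => hj.trans hid

lemma competitionRank_orderEmbedding_comp [Preorder κ] [DecidableLT κ] [Preorder μ] [DecidableLT μ]
    (e : κ ↪o μ) (f : ι → κ) (c : κ) : competitionRank (e ∘ f) (e c) = competitionRank f c := by
  simp [competitionRank]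

end CompetitionRank

section FubiniRankings

variable {n k : ℕ} {κ : Type*}

lemma isFubini_iff_competitionRank {α : Fin n → Fin n} :
    IsFubini α ↔ ∀ i, competitionRank α (α i) = α i :=
  Set.forall_mem_range

/-- The ranking of `n` competitors by their scores `f`, low scores winning and equal scores
sharing a rank. -/
def competitionRanking [Preorder κ] [DecidableLT κ] (f : Fin n → κ) (i : Fin n) : Fin n :=
  ⟨competitionRank f (f i), by simpa using competitionRank_lt_card f i⟩

lemma isFubini_competitionRanking [LinearOrder κ] (f : Fin n → κ) :
    IsFubini (competitionRanking f) := by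
  refine isFubini_iff_competitionRank.2 fun i => congrArg card (filter_congr fun j _ => ?_)
  exact (strictMonoOn_competitionRank f).lt_iff_lt ⟨j, rfl⟩ ⟨i, rfl⟩

lemma image_val_range_competitionRanking [Preorder κ] [DecidableLT κ] (f : Fin n → κ) :
    Fin.val '' Set.range (competitionRanking f) = competitionRank f '' Set.range f := by
  rw [← Set.range_comp, ← Set.range_comp]
  rfl

lemma ncard_range_competitionRanking [LinearOrder κ] (f : Fin n → κ) :
    (Set.range (competitionRanking f)).ncard = (Set.range f).ncard := by
  rw [← Set.ncard_image_of_injective _ Fin.val_injective, image_val_range_competitionRanking,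
    (strictMonoOn_competitionRank f).injOn.ncard_image]

lemma eq_of_competitionRanking_eq [LinearOrder κ] [WellFoundedLT κ]
    {f g : Fin n → κ} (hf : Surjective f) (hg : Surjective g)
    (h : competitionRanking f = competitionRanking g) : f = g := by
  have hmono {f : Fin n → κ} (hf : Surjective f) : StrictMono (competitionRank f) := by
    simpa [hf.range_eq] using strictMonoOn_competitionRank f
  have hrange {f : Fin n → κ} (hf : Surjective f) :
      Set.range (competitionRank f) = Fin.val '' Set.range (competitionRanking f) := by
    rw [image_val_range_competitionRanking, hf.range_eq, Set.image_univ]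
  have hrank : competitionRank f = competitionRank g :=
    ((hmono hf).range_inj (hmono hg)).1 (by rw [hrange hf, hrange hg, h])
  funext i
  apply (hmono hf).injective
  calc competitionRank f (f i) = competitionRank g (g i) := congrArg Fin.val (congrFun h i)
    _ = competitionRank f (g i) := by rw [hrank]

lemma IsFubini.exists_surjective_competitionRanking_eq {α : Fin n → Fin n} (hα : IsFubini α)
    (hk : (Set.range α).ncard = k) :
    ∃ f : Fin n → Fin k, Surjective f ∧ competitionRanking f = α := by
  rw [Set.ncard_eq_toFinset_card'] at hk
  let e : Fin k ↪o Fin n := (Set.range α).toFinset.orderEmbOfFin hk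
  have he : Set.range e = Set.range α := by simp [e]
  choose f hf using fun i => he.ge ⟨i, rfl⟩
  refine ⟨f, fun c => ?_, funext fun i => Fin.ext ?_⟩
  · obtain ⟨i, hi⟩ := he.le ⟨c, rfl⟩
    exact ⟨i, e.injective ((hf i).trans hi)⟩
  · calc competitionRank f (f i) = competitionRank (e ∘ f) (e (f i)) :=
          (competitionRank_orderEmbedding_comp e f (f i)).symm
      _ = competitionRank α (α i) := by rw [hf i, show e ∘ f = α from funext hf]
      _ = α i := isFubini_iff_competitionRank.1 hα i

lemma bijOn_firstOccurrences_range {ι : Type*} [LinearOrder ι] [WellFoundedLT ι] (f : ι → κ) :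
    Set.BijOn f {i | ∀ j, j < i → f j ≠ f i} (Set.range f) := by
  refine ⟨fun i _ => ⟨i, rfl⟩, fun i hi j hj hij => ?_, ?_⟩
  · exact le_antisymm (not_lt.1 fun h => hi j h hij.symm) (not_lt.1 fun h => hj i h hij)
  · rintro _ ⟨i, rfl⟩
    obtain ⟨m, hm, hmin⟩ := wellFounded_lt.has_min {j | f j = f i} ⟨i, rfl⟩
    exact ⟨m, fun j hjm hj => hmin j (hj.trans hm) hjm, hm⟩

lemma lucky_eq_ncard_range (α : Fin n → Fin n) : lucky α = (Set.range α).ncard := by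
  rw [← (bijOn_firstOccurrences_range α).image_eq,
    (bijOn_firstOccurrences_range α).injOn.ncard_image, lucky, ← Set.ncard_coe_finset, luckySet,
    coe_filter_univ]

lemma card_fubini_lucky_eq_card_surjective (n k : ℕ) :
    Nat.card {α : Fin n → Fin n // IsFubini α ∧ lucky α = k}
      = Nat.card {f : Fin n → Fin k // Surjective f} := by
  simp only [lucky_eq_ncard_range]
  symm
  refine Nat.card_eq_of_bijective (fun f => ⟨competitionRanking f.1,
    isFubini_competitionRanking f.1, ?_⟩) ⟨fun f g h => ?_, fun ⟨α, hα, hk⟩ => ?_⟩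
  · simp [ncard_range_competitionRanking, f.2.range_eq]
  · exact Subtype.ext <| eq_of_competitionRanking_eq f.2 g.2 (congrArg Subtype.val h)
  · obtain ⟨f, hf, rfl⟩ := hα.exists_surjective_competitionRanking_eq hk
    exact ⟨⟨f, hf⟩, rfl⟩

end FubiniRankings

section Surjections

variable {ι κ : Type*}

lemma ker_comp_quotientMk_of_injective {r : Setoid ι} {g : Quotient r → κ} (hg : Injective g) :
    Setoid.ker (g ∘ Quotient.mk r) = r := by
  ext i j
  simp [Setoid.ker_def, hg.eq_iff, Quotient.eq]

variable (ι κ)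

/-- A surjection is an equivalence relation together with a labelling of its classes. Relations
admitting no labelling contribute nothing; they are excluded so that the sum becomes a product in
`surjectionEquivSetoidProdPerm`. -/
noncomputable def sigmaQuotientEquivEquivSurjection :
    (Σ r : {r : Setoid ι // Nonempty (Quotient r ≃ κ)}, Quotient r.1 ≃ κ) ≃
      {f : ι → κ // Surjective f} :=
  Equiv.ofBijective
    (fun p => ⟨p.2 ∘ Quotient.mk p.1.1, p.2.surjective.comp Quotient.mk_surjective⟩) <| by
    constructor
    · rintro ⟨⟨r, hr⟩, e⟩ ⟨⟨s, hs⟩, e'⟩ h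
      have hcomp : e ∘ Quotient.mk r = e' ∘ Quotient.mk s := congrArg Subtype.val h
      obtain rfl : r = s :=
        calc r = Setoid.ker (e ∘ Quotient.mk r) :=
              (ker_comp_quotientMk_of_injective e.injective).symm
          _ = Setoid.ker (e' ∘ Quotient.mk s) := by rw [hcomp]
          _ = s := ker_comp_quotientMk_of_injective e'.injective
      obtain rfl : e = e' :=
        DFunLike.coe_injective (Quotient.mk_surjective.injective_comp_right hcomp)
      rfl
    · intro f
      let e := Setoid.quotientKerEquivOfSurjective f.1 f.2
      exact ⟨⟨⟨Setoid.ker f.1, ⟨e⟩⟩, e⟩, rfl⟩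

/-- The labellings of the classes of an equivalence relation by `κ` form a torsor under the
permutations of `κ`, so after choosing one labelling for each relation they become permutations. -/
noncomputable def surjectionEquivSetoidProdPerm :
    {f : ι → κ // Surjective f} ≃
      {r : Setoid ι // Nonempty (Quotient r ≃ κ)} × Equiv.Perm κ :=
  (sigmaQuotientEquivEquivSurjection ι κ).symm.trans <|
    Equiv.sigmaEquivProdOfEquiv fun r => Equiv.equivCongr r.2.some (Equiv.refl κ)

lemma card_surjective_eq_factorial_mul_card_setoid [Finite κ] :
    Nat.card {f : ι → κ // Surjective f}
      = (Nat.card κ).factorial * Nat.card {r : Setoid ι // Nonempty (Quotient r ≃ κ)} := by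
  rw [Nat.card_congr (surjectionEquivSetoidProdPerm ι κ), Nat.card_prod, Nat.card_perm, mul_comm]

end Surjections

section Partitions

variable {ι : Type*}

lemma nonempty_quotient_equiv_fin_iff [Finite ι] {r : Setoid ι} {k : ℕ} :
    Nonempty (Quotient r ≃ Fin k) ↔ r.classes.ncard = k := by
  rw [← Finite.card_eq, Nat.card_congr r.quotientEquivClasses, Nat.card_fin, Nat.card_coe_set_eq]

variable [Fintype ι]

/-- On a finite type, finsets of finsets are the same thing as sets of sets. This translates the
blocks counted by `stirling2` into those of `Setoid.IsPartition`. -/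
noncomputable def finsetFinsetEquivSetSet : Finset (Finset ι) ≃ Set (Set ι) :=
  Fintype.finsetEquivSet.trans (Equiv.Set.congr Fintype.finsetEquivSet)

lemma coe_mem_finsetFinsetEquivSetSet {P : Finset (Finset ι)} {B : Finset ι} :
    (B : Set ι) ∈ finsetFinsetEquivSetSet P ↔ B ∈ P := by
  simp [finsetFinsetEquivSetSet]

lemma isPartition_finsetFinsetEquivSetSet {P : Finset (Finset ι)} :
    Setoid.IsPartition (finsetFinsetEquivSetSet P) ↔
      (∀ B ∈ P, B.Nonempty) ∧ ∀ i : ι, ∃! B, B ∈ P ∧ i ∈ B := by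
  refine and_congr ?_ (forall_congr' fun i => ?_)
  · rw [← coe_empty, coe_mem_finsetFinsetEquivSetSet]
    exact ⟨fun h B hB => nonempty_iff_ne_empty.2 (ne_of_mem_of_not_mem hB h),
      fun h h_empty => not_nonempty_empty (h ∅ h_empty)⟩
  · exact (Fintype.finsetEquivSet.existsUnique_congr fun B => by
      simp [coe_mem_finsetFinsetEquivSetSet]).symm

lemma ncard_finsetFinsetEquivSetSet (P : Finset (Finset ι)) :
    (finsetFinsetEquivSetSet P).ncard = #P := by
  simp [finsetFinsetEquivSetSet, Set.ncard_image_of_injective _ coe_injective]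

lemma stirling2_eq_card_setoid (n k : ℕ) :
    stirling2 n k = Nat.card {r : Setoid (Fin n) // Nonempty (Quotient r ≃ Fin k)} :=
  Nat.card_congr <|
    calc {P : Finset (Finset (Fin n)) // #P = k ∧ (∀ B ∈ P, B.Nonempty) ∧
            ∀ i : Fin n, ∃! B : Finset (Fin n), B ∈ P ∧ i ∈ B}
      _ ≃ {C : Set (Set (Fin n)) // Setoid.IsPartition C ∧ C.ncard = k} :=
        finsetFinsetEquivSetSet.subtypeEquiv fun P => by
          rw [isPartition_finsetFinsetEquivSetSet, ncard_finsetFinsetEquivSetSet, and_comm]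
      _ ≃ {C : Setoid.Partitions (Fin n) // C.toSet.ncard = k} :=
        (Equiv.subtypeSubtypeEquivSubtypeInter Setoid.IsPartition (Set.ncard · = k)).symm
      _ ≃ {r : Setoid (Fin n) // Nonempty (Quotient r ≃ Fin k)} :=
        ((Setoid.Partition.orderIso (Fin n)).toEquiv.subtypeEquiv fun r =>
          nonempty_quotient_equiv_fin_iff).symm

end Partitions

/-- The number of Fubini rankings with `n` competitors having exactly
`k` lucky cars equals `k! · S(n,k)`. -/
theorem card_fubini_lucky_eq_factorial_mul_stirling
    (n k : ℕ) (hn : 1 ≤ n) (hk : 1 ≤ k) (hkn : k ≤ n) :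
    Nat.card {α : Fin n → Fin n // IsFubini α ∧ lucky α = k}
      = Nat.factorial k * stirling2 n k := by
  rw [card_fubini_lucky_eq_card_surjective, card_surjective_eq_factorial_mul_card_setoid,
    Nat.card_fin, stirling2_eq_card_setoid]
end

section
/- For all n ≥ 1 and 1 ≤ k ≤ n, the number of weakly increasing Fubini rankings with n competitors having exactly k lucky cars equals the binomial coefficient C(n−1, k−1). Consequently, the total number of weakly increasing Fubini rankings with n competitors is |FR_n^↑| = 2^{n−1}. -/
/-!
In a weakly increasing ranking the competitors ranked before an occurring rank `r` occupy an initial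
segment of the positions, so the Fubini condition says that this segment is exactly the set of
positions before `r`. Hence `α i` is the first position of the block of ties containing `i`:
the last lucky position at or before `i`. So `α` is recovered from its lucky cars, and any set of
positions containing the first one occurs as the set of lucky cars.
-/

open Finset

section FloorMap

variable {ι : Type*}

/-- `IsFloorMap T f` says that `f` rounds every element down to the greatest element of `T` at or
below it. It is a predicate on `f` because such a greatest element may fail to exist. A weakly
increasing Fubini ranking is the floor map of its set of lucky cars. -/
def IsFloorMap [Preorder ι] (T : Set ι) (f : ι → ι) : Prop :=
  ∀ i, IsGreatest (T ∩ Set.Iic i) (f i)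

theorem isFloorMap_fixedPoints [Preorder ι] {f : ι → ι} (hf : Monotone f)
    (hle : ∀ i, f i ≤ i) (hidem : ∀ i, f (f i) = f i) :
    IsFloorMap (Function.fixedPoints f) f :=
  fun i => ⟨⟨hidem i, hle i⟩, fun _ ⟨ht, hti⟩ => ht.symm.trans_le (hf hti)⟩

theorem exists_isFloorMap [LinearOrder ι] [OrderBot ι] {T : Finset ι} (hT : ⊥ ∈ T) :
    ∃ f, IsFloorMap (T : Set ι) f := by
  have hne (i : ι) : {t ∈ T | t ≤ i}.Nonempty := ⟨⊥, mem_filter.2 ⟨hT, bot_le⟩⟩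
  refine ⟨fun i => max' _ (hne i), fun i => ?_⟩
  have hmax := isGreatest_max' _ (hne i)
  rwa [coe_filter] at hmax

namespace IsFloorMap

section Preorder

variable [Preorder ι] {T : Set ι} {f : ι → ι}

theorem apply_mem (h : IsFloorMap T f) (i : ι) : f i ∈ T :=
  (h i).1.1

theorem apply_le (h : IsFloorMap T f) (i : ι) : f i ≤ i :=
  (h i).1.2

theorem le_apply (h : IsFloorMap T f) {t i : ι} (ht : t ∈ T) (hti : t ≤ i) : t ≤ f i :=
  (h i).2 ⟨ht, hti⟩

protected theorem monotone (h : IsFloorMap T f) : Monotone f :=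
  fun i _ hij => h.le_apply (h.apply_mem i) ((h.apply_le i).trans hij)

end Preorder

section PartialOrder

variable [PartialOrder ι] {T : Set ι} {f g : ι → ι}

protected theorem unique (hf : IsFloorMap T f) (hg : IsFloorMap T g) : f = g :=
  funext fun i => (hf i).unique (hg i)

theorem apply_eq_self (h : IsFloorMap T f) {t : ι} (ht : t ∈ T) : f t = t :=
  (h.apply_le t).antisymm (h.le_apply ht le_rfl)

theorem apply_apply (h : IsFloorMap T f) (i : ι) : f (f i) = f i :=
  h.apply_eq_self (h.apply_mem i)

theorem fixedPoints_eq (h : IsFloorMap T f) : Function.fixedPoints f = T :=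
  Set.Subset.antisymm (fun i hi => hi ▸ h.apply_mem i) fun _ => h.apply_eq_self

end PartialOrder

theorem apply_lt_apply_iff [LinearOrder ι] {T : Set ι} {f : ι → ι} (h : IsFloorMap T f)
    {i j : ι} : f j < f i ↔ j < f i :=
  ⟨fun hlt => not_le.1 fun hle => (h.le_apply (h.apply_mem i) hle).not_gt hlt,
    (h.apply_le j).trans_lt⟩

end IsFloorMap

end FloorMap

section Ranking

variable {n : ℕ} {α : Fin n → Fin n}

theorem card_eq_val_iff_eq_Iio_of_isLowerSet {s : Finset (Fin n)}
    (hs : IsLowerSet (s : Set (Fin n))) (r : Fin n) : #s = (r : ℕ) ↔ s = Iio r := by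
  refine ⟨fun hr => ?_, fun h => by rw [h, Fin.card_Iio]⟩
  have hcard : #s = #(Iio r) := hr.trans (Fin.card_Iio r).symm
  rcases hs.total (isLowerSet_Iio r) with hsub | hsub <;>
    rw [← coe_Iio, coe_subset] at hsub
  · exact eq_of_subset_of_card_le hsub hcard.ge
  · exact (eq_of_subset_of_card_le hsub hcard.le).symm

theorem isFubini_iff_of_monotone (hα : Monotone α) :
    IsFubini α ↔ ∀ i j, α j < α i ↔ j < α i := by
  have hlower (r : Fin n) : IsLowerSet (({j | α j < r} : Finset (Fin n)) : Set (Fin n)) := by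
    rw [coe_filter_univ]
    exact (isLowerSet_Iio r).preimage hα
  simp only [IsFubini, forall_exists_index, forall_apply_eq_imp_iff,
    card_eq_val_iff_eq_Iio_of_isLowerSet (hlower _), Finset.ext_iff, mem_filter_univ, mem_Iio]

theorem coe_luckySet_eq_fixedPoints (hle : ∀ i, α i ≤ i) (hidem : ∀ i, α (α i) = α i) :
    (luckySet α : Set (Fin n)) = Function.fixedPoints α := by
  ext i
  simp only [luckySet, coe_filter_univ, Set.mem_ofPred_eq, Function.mem_fixedPoints]
  constructor
  · intro hlucky
    by_contra hne
    exact hlucky (α i) ((hle i).lt_of_ne hne) (hidem i)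
  · intro hfix j hji
    exact (((hle j).trans_lt hji).trans_eq hfix.symm).ne

theorem IsFubini.isFloorMap_luckySet (hF : IsFubini α) (hα : Monotone α) :
    IsFloorMap (luckySet α : Set (Fin n)) α := by
  have hlt := (isFubini_iff_of_monotone hα).1 hF
  have hle (i : Fin n) : α i ≤ i := not_lt.1 fun h => ((hlt i i).2 h).false
  have hidem (i : Fin n) : α (α i) = α i :=
    (hle _).antisymm <| not_lt.1 fun h => ((hlt i (α i)).1 h).false
  rw [coe_luckySet_eq_fixedPoints hle hidem]
  exact isFloorMap_fixedPoints hα hle hidem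

theorem IsFloorMap.isFubini {T : Set (Fin n)} (h : IsFloorMap T α) : IsFubini α :=
  (isFubini_iff_of_monotone h.monotone).2 fun _ _ => h.apply_lt_apply_iff

theorem IsFloorMap.coe_luckySet {T : Set (Fin n)} (h : IsFloorMap T α) :
    (luckySet α : Set (Fin n)) = T :=
  (coe_luckySet_eq_fixedPoints h.apply_le h.apply_apply).trans h.fixedPoints_eq

theorem zero_mem_luckySet [NeZero n] (α : Fin n → Fin n) : 0 ∈ luckySet α := by
  simp [luckySet]

theorem bijOn_luckySet [NeZero n] :
    Set.BijOn luckySet {α : Fin n → Fin n | IsFubini α ∧ Monotone α} {T | 0 ∈ T} := by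
  refine ⟨fun α _ => zero_mem_luckySet α, ?_, fun T hT => ?_⟩
  · rintro α ⟨hFα, hα⟩ β ⟨hFβ, hβ⟩ heq
    have hfloor := hFα.isFloorMap_luckySet hα
    rw [heq] at hfloor
    exact hfloor.unique (hFβ.isFloorMap_luckySet hβ)
  · obtain ⟨α, hα⟩ := exists_isFloorMap hT
    exact ⟨α, ⟨hα.isFubini, hα.monotone⟩, coe_injective hα.coe_luckySet⟩

theorem bijOn_luckySet_of_lucky_eq [NeZero n] (k : ℕ) :
    Set.BijOn luckySet {α : Fin n → Fin n | IsFubini α ∧ Monotone α ∧ lucky α = k}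
      {T | 0 ∈ T ∧ #T = k} := by
  simpa only [← Set.ofPred_and, and_assoc] using
    bijOn_luckySet.inter_mapsTo (s₂ := {α : Fin n → Fin n | lucky α = k})
      (t₂ := {T | #T = k}) (fun _ hα => hα) fun _ hα => hα.2

end Ranking

section Counting

variable {ι : Type*} [Fintype ι]

theorem natCard_finset_mem (a : ι) :
    Nat.card {T : Finset ι // a ∈ T} = 2 ^ (Fintype.card ι - 1) := by
  classical
  rw [Nat.subtype_card (Icc {a} univ) (by simp), card_Icc_finset (subset_univ _),
    card_univ, card_singleton]

theorem natCard_finset_mem_card_eq (a : ι) {k : ℕ} (hk : 1 ≤ k) :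
    Nat.card {T : Finset ι // a ∈ T ∧ #T = k} = (Fintype.card ι - 1).choose (k - 1) := by
  classical
  rw [Nat.subtype_card {T ∈ powersetCard k univ | {a} ⊆ T} (by simp [and_comm]),
    card_filter_powersetCard_subset _ _ _ (subset_univ _) (by simpa using hk),
    card_univ, card_singleton]

end Counting

/-- For `1 ≤ k ≤ n`, the number of weakly increasing Fubini rankings
with `n` competitors having exactly `k` lucky cars is `C(n−1, k−1)`; consequently the
total number of weakly increasing Fubini rankings is `2^(n−1)`. -/
theorem card_weakly_increasing_fubini (n : ℕ) (hn : 1 ≤ n) :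
    (∀ k : ℕ, 1 ≤ k → k ≤ n →
      Nat.card {α : Fin n → Fin n // IsFubini α ∧ Monotone α ∧ lucky α = k}
        = Nat.choose (n - 1) (k - 1))
    ∧ Nat.card {α : Fin n → Fin n // IsFubini α ∧ Monotone α} = 2 ^ (n - 1) := by
  have : NeZero n := ⟨Nat.one_le_iff_ne_zero.1 hn⟩
  refine ⟨fun k hk _ => ?_, ?_⟩
  · calc
      _ = Nat.card {T : Finset (Fin n) // 0 ∈ T ∧ #T = k} :=
        Nat.card_congr (bijOn_luckySet_of_lucky_eq k).equiv
      _ = (n - 1).choose (k - 1) := by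
        rw [natCard_finset_mem_card_eq 0 hk, Fintype.card_fin]
  · calc
      _ = Nat.card {T : Finset (Fin n) // 0 ∈ T} := Nat.card_congr bijOn_luckySet.equiv
      _ = 2 ^ (n - 1) := by rw [natCard_finset_mem, Fintype.card_fin]
end

section
/- For all n ≥ 1 and 1 ≤ k ≤ n, the number f_UFR(n,k) of unit Fubini rankings with n competitors having exactly k lucky cars satisfies 2^{n−k}·f_UFR(n,k) = n!·C(k, n−k), where C(k, n−k) is the binomial coefficient (equal to 0 when n−k > k); that is, f_UFR(n,k) = (n!/2^{n−k})·C(k, n−k). -/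
/-- `α` has every value occurring at most twice among its entries (the "unit" condition:
a unit Fubini ranking is a Fubini ranking in which at most two competitors share a rank). -/
def IsUnit2 {n : ℕ} (α : Fin n → Fin n) : Prop :=
  ∀ r : Fin n, (Finset.univ.filter (fun i => α i = r)).card ≤ 2

/-! A Fubini ranking with `k` distinct ranks is the standard competition ranking of a unique
surjection onto `Fin k`, its dense ranking, and both have the same ties. Unit Fubini rankings of
`n` competitors with `k` lucky cars thus correspond to surjections `Fin n → Fin k` with fibers of
size at most `2`. Exactly `n - k` fibers then have size `2`, and by orbit-stabilizer each of the
`k.choose (n - k)` choices of these fibers is realized by `n ! / 2 ^ (n - k)` surjections. -/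

namespace UnitFubini

open Finset Function

open scoped Nat

section Fibers

variable {ι κ : Type*} [Fintype ι] [DecidableEq κ]

lemma card_fiber_le_iff {f : ι → κ} {m : ℕ} :
    (∀ b, #{i | f i = b} ≤ m) ↔ ∀ i, #{j | f j = f i} ≤ m := by
  refine ⟨fun h i => h (f i), fun h b => ?_⟩
  rcases ({i | f i = b} : Finset ι).eq_empty_or_nonempty with hb | ⟨i, hi⟩
  · simp [hb]
  · obtain rfl : f i = b := by simpa using hi
    exact h i

lemma surjective_iff_card_fiber_pos {f : ι → κ} : Surjective f ↔ ∀ b, 0 < #{i | f i = b} := by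
  simp only [Surjective, card_pos, filter_nonempty_iff, mem_univ, true_and]

lemma card_firstOccurrences [LinearOrder ι] (f : ι → κ) :
    #{i | ∀ j < i, f j ≠ f i} = #(univ.image f) := by
  have injOn : Set.InjOn f ({i | ∀ j < i, f j ≠ f i} : Finset ι) := by
    intro i hi j hj hij
    simp only [coe_filter, mem_univ, true_and, Set.mem_ofPred_eq] at hi hj
    exact le_antisymm (not_lt.1 fun h => hi j h hij.symm) (not_lt.1 fun h => hj i h hij)
  rw [← card_image_of_injOn injOn]
  congr 1
  refine (image_subset_image (subset_univ _)).antisymm fun b hb => ?_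
  obtain ⟨i, -, rfl⟩ := mem_image.1 hb
  obtain ⟨m, hm, hmin⟩ := ({j | f j = f i} : Finset ι).exists_min_image id ⟨i, by simp⟩
  simp only [mem_filter, mem_univ, true_and, id] at hm hmin
  refine mem_image.2 ⟨m, ?_, hm⟩
  simpa using fun j hj he => (hmin j (he.trans hm)).not_gt hj

lemma mem_orbit_domMulAct_iff {f g : ι → κ} :
    g ∈ MulAction.orbit (Equiv.Perm ι)ᵈᵐᵃ f ↔ ∀ b, #{i | g i = b} = #{i | f i = b} := by
  constructor
  · rintro ⟨σ, rfl⟩ b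
    exact card_equiv (DomMulAct.mk.symm σ) fun i => by simp [DomMulAct.smul_apply]
  · intro h
    have fiberEquiv (b : κ) : Nonempty ({i // g i = b} ≃ {i // f i = b}) :=
      Fintype.card_eq.1 (by simpa only [Fintype.card_subtype] using h b)
    exact ⟨DomMulAct.mk (Equiv.ofFiberEquiv fun b => (fiberEquiv b).some),
      funext (Equiv.ofFiberEquiv_map _)⟩

variable [Fintype κ]

lemma exists_card_fiber_eq {c : κ → ℕ} (hc : ∑ b, c b = Fintype.card ι) :
    ∃ f : ι → κ, ∀ b, #{i | f i = b} = c b := by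
  obtain ⟨e⟩ : Nonempty (ι ≃ Σ b, Fin (c b)) := Fintype.card_eq.1 (by simp [hc])
  refine ⟨fun i => (e i).1, fun b => ?_⟩
  calc #{i | (e i).1 = b} = Fintype.card {x : Σ b, Fin (c b) // x.1 = b} := by
        rw [Fintype.card_subtype]
        exact card_equiv e (by simp)
    _ = c b := by
        rw [Fintype.card_congr (Equiv.sigmaSubtype b), Fintype.card_fin]

lemma sum_ite_two_one (s : Finset κ) : ∑ b, (if b ∈ s then 2 else 1) = Fintype.card κ + #s := by
  calc ∑ b, (if b ∈ s then 2 else 1) = ∑ b, (1 + if b ∈ s then 1 else 0) :=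
        sum_congr rfl fun b _ => by split_ifs <;> rfl
    _ = Fintype.card κ + #s := by simp [sum_add_distrib]

lemma forall_card_fiber_eq_ite_iff {f : ι → κ} {s : Finset κ} :
    (∀ b, #{i | f i = b} = if b ∈ s then 2 else 1) ↔
      (Surjective f ∧ ∀ b, #{i | f i = b} ≤ 2) ∧ ({b | #{i | f i = b} = 2} : Finset κ) = s := by
  simp only [surjective_iff_card_fiber_pos, ← forall_and, Finset.ext_iff, mem_filter_univ]
  exact forall_congr' fun b => by by_cases hb : b ∈ s <;> simp only [hb, if_true, if_false] <;> lia

lemma card_add_card_fiber_eq_two {f : ι → κ} (hf : Surjective f)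
    (hf₂ : ∀ b, #{i | f i = b} ≤ 2) :
    Fintype.card κ + #{b | #{i | f i = b} = 2} = Fintype.card ι := by
  rw [← sum_ite_two_one, ← card_univ (α := ι),
    card_eq_sum_card_fiberwise (f := f) fun i _ => mem_univ (f i)]
  exact sum_congr rfl fun b _ => (forall_card_fiber_eq_ite_iff.2 ⟨⟨hf, hf₂⟩, rfl⟩ b).symm

lemma card_filter_card_fiber_eq [DecidableEq ι] {c : κ → ℕ} (hc : ∑ b, c b = Fintype.card ι) :
    #{f : ι → κ | ∀ b, #{i | f i = b} = c b} = Nat.multinomial univ c := by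
  obtain ⟨f₀, hf₀⟩ := exists_card_fiber_eq hc
  have card_orbit : Nat.card (MulAction.orbit (Equiv.Perm ι)ᵈᵐᵃ f₀) =
      #{f : ι → κ | ∀ b, #{i | f i = b} = c b} := by
    rw [← Fintype.card_subtype, ← Nat.card_eq_fintype_card]
    exact Nat.card_congr (Equiv.subtypeEquivRight fun f => by
      simp only [mem_orbit_domMulAct_iff, hf₀])
  have card_stabilizer : Nat.card (MulAction.stabilizer (Equiv.Perm ι)ᵈᵐᵃ f₀) = ∏ b, (c b)! := by
    rw [Nat.card_congr MulOpposite.opEquiv,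
      Nat.card_congr (DomMulAct.stabilizerMulEquiv f₀).toEquiv, Nat.card_pi]
    exact prod_congr rfl fun b _ => by
      rw [Nat.card_perm, Nat.card_eq_fintype_card, Fintype.card_subtype, hf₀]
  have orbit_stabilizer := Nat.card_congr
    (MulAction.orbitProdStabilizerEquivGroup (Equiv.Perm ι)ᵈᵐᵃ f₀)
  rw [Nat.card_prod, card_orbit, card_stabilizer, Nat.card_congr DomMulAct.mk.symm,
    Nat.card_perm, Nat.card_eq_fintype_card, ← hc, ← Nat.multinomial_spec, mul_comm]
    at orbit_stabilizer
  exact Nat.eq_of_mul_eq_mul_left (Nat.prod_factorial_pos _ _) orbit_stabilizer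

lemma two_pow_mul_card_filter_card_fiber_eq_ite [DecidableEq ι] {s : Finset κ}
    (h : Fintype.card ι = Fintype.card κ + #s) :
    2 ^ #s * #{f : ι → κ | ∀ b, #{i | f i = b} = if b ∈ s then 2 else 1} =
      (Fintype.card ι)! := by
  have prod_factorial : ∏ b, (if b ∈ s then 2 else 1)! = 2 ^ #s := by
    simp [apply_ite Nat.factorial]
  rw [card_filter_card_fiber_eq ((sum_ite_two_one s).trans h.symm), ← prod_factorial,
    Nat.multinomial_spec, sum_ite_two_one, h]

theorem two_pow_mul_card_surjective_card_fiber_le_two {j : ℕ}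
    (h : Fintype.card ι = Fintype.card κ + j) :
    2 ^ j * Nat.card {f : ι → κ // Surjective f ∧ ∀ b, #{i | f i = b} ≤ 2} =
      (Fintype.card ι)! * (Fintype.card κ).choose j := by
  classical
  have doubled_mem : ∀ f ∈ ({f | Surjective f ∧ ∀ b, #{i | f i = b} ≤ 2} : Finset (ι → κ)),
      ({b | #{i | f i = b} = 2} : Finset κ) ∈ powersetCard j univ := fun f hf => by
    obtain ⟨hf, hf₂⟩ := (mem_filter_univ f).1 hf
    exact mem_powersetCard_univ.2
      (Nat.add_left_cancel ((card_add_card_fiber_eq_two hf hf₂).trans h))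
  rw [Nat.card_eq_fintype_card, Fintype.card_subtype,
    card_eq_sum_card_fiberwise doubled_mem, mul_sum]
  simp only [filter_filter, ← forall_card_fiber_eq_ite_iff]
  calc ∑ s ∈ powersetCard j univ,
        2 ^ j * #{f : ι → κ | ∀ b, #{i | f i = b} = if b ∈ s then 2 else 1}
      = ∑ _s ∈ powersetCard j (univ : Finset κ), (Fintype.card ι)! :=
        sum_congr rfl fun s hs => by
          obtain rfl := mem_powersetCard_univ.1 hs
          exact two_pow_mul_card_filter_card_fiber_eq_ite h
    _ = (Fintype.card ι)! * (Fintype.card κ).choose j := by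
        rw [sum_const, card_powersetCard, card_univ, smul_eq_mul, mul_comm]

end Fibers

section CompetitionRank

variable {n : ℕ} {κ : Type*} [LinearOrder κ]

/-- The standard competition ranking of the scores `f`, low scores being best. It ranks from `0`,
matching the encoding of ranks by `Fin n` in `IsFubini`. -/
def competitionRank (f : Fin n → κ) (i : Fin n) : Fin n :=
  ⟨#{j | f j < f i}, by
    simpa using card_lt_card (filter_ssubset.2 ⟨i, mem_univ i, lt_irrefl (f i)⟩)⟩

lemma competitionRank_lt_iff {f : Fin n → κ} {i j : Fin n} :
    competitionRank f i < competitionRank f j ↔ f i < f j := by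
  simp only [competitionRank, Fin.mk_lt_mk]
  refine ⟨fun h => lt_of_not_ge fun hji => h.not_ge ?_, fun h => card_lt_card ?_⟩
  · exact card_le_card (monotone_filter_right _ fun l _ hl => hl.trans_le hji)
  · refine (ssubset_iff_of_subset (monotone_filter_right _ fun l _ hl => hl.trans h)).2 ⟨i, ?_⟩
    simpa only [mem_filter_univ, lt_irrefl, not_false_eq_true, and_true] using h

lemma competitionRank_eq_iff {f : Fin n → κ} {i j : Fin n} :
    competitionRank f i = competitionRank f j ↔ f i = f j := by
  simp only [eq_iff_le_not_lt, ← not_lt, competitionRank_lt_iff]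

lemma isFubini_iff_competitionRank_eq {α : Fin n → Fin n} :
    IsFubini α ↔ competitionRank α = α := by
  simp only [IsFubini, forall_exists_index, forall_apply_eq_imp_iff]
  simp only [competitionRank, funext_iff, Fin.ext_iff]

lemma isFubini_competitionRank (f : Fin n → κ) : IsFubini (competitionRank f) := by
  rintro _ ⟨i, rfl⟩
  simp only [competitionRank_lt_iff]
  rfl

lemma lucky_competitionRank (f : Fin n → κ) : lucky (competitionRank f) = #(univ.image f) := by
  simp only [lucky, luckySet, ne_eq, competitionRank_eq_iff, ← card_firstOccurrences]

lemma isUnit2_competitionRank_iff {f : Fin n → κ} :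
    IsUnit2 (competitionRank f) ↔ ∀ b, #{i | f i = b} ≤ 2 := by
  simp only [IsUnit2, card_fiber_le_iff, competitionRank_eq_iff]

lemma competitionRank_comp_of_strictMono {κ' : Type*} [LinearOrder κ'] {e : κ → κ'}
    (he : StrictMono e) (f : Fin n → κ) : competitionRank (e ∘ f) = competitionRank f := by
  simp only [funext_iff, competitionRank, comp_apply, he.lt_iff_lt, implies_true]

lemma competitionRank_injOn_surjective [WellFoundedLT κ] :
    Set.InjOn competitionRank {f : Fin n → κ | Surjective f} := by
  have le_of_competitionRank_eq {f g : Fin n → κ} (hg : Surjective g)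
      (hfg : competitionRank f = competitionRank g) (i : Fin n) : g i ≤ f i := by
    have strictMono : StrictMono (f ∘ surjInv hg) := fun a b hab => by
      rwa [comp_apply, comp_apply, ← competitionRank_lt_iff, hfg, competitionRank_lt_iff,
        surjInv_eq hg, surjInv_eq hg]
    have apply_surjInv : f (surjInv hg (g i)) = f i := by
      rw [← competitionRank_eq_iff, hfg, competitionRank_eq_iff, surjInv_eq hg]
    exact (strictMono.id_le (g i)).trans_eq apply_surjInv
  exact fun f hf g hg hfg =>
    funext fun i => (le_of_competitionRank_eq hf hfg.symm i).antisymm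
      (le_of_competitionRank_eq hg hfg i)

lemma exists_surjective_competitionRank_eq {f : Fin n → κ} {k : ℕ} (hk : #(univ.image f) = k) :
    ∃ g : Fin n → Fin k, Surjective g ∧ competitionRank g = competitionRank f := by
  let e : Fin k ≃o univ.image f := (univ.image f).orderIsoOfFin hk
  let f' : Fin n → univ.image f := fun i => ⟨f i, mem_image_of_mem f (mem_univ i)⟩
  have hf' : Surjective f' := by
    rintro ⟨b, hb⟩
    obtain ⟨i, -, rfl⟩ := mem_image.1 hb
    exact ⟨i, rfl⟩
  refine ⟨e.symm ∘ f', e.symm.surjective.comp hf', ?_⟩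
  rw [competitionRank_comp_of_strictMono e.symm.strictMono]
  exact (competitionRank_comp_of_strictMono (Subtype.strictMono_coe _) f').symm

lemma bijOn_competitionRank (n k : ℕ) :
    Set.BijOn competitionRank
      {f : Fin n → Fin k | Surjective f ∧ ∀ b, #{i | f i = b} ≤ 2}
      {α | IsFubini α ∧ IsUnit2 α ∧ lucky α = k} := by
  refine ⟨fun f ⟨hf, hf₂⟩ => ⟨isFubini_competitionRank f, isUnit2_competitionRank_iff.2 hf₂, ?_⟩,
    competitionRank_injOn_surjective.mono fun f hf => hf.1, fun α ⟨hα, hα₂, hk⟩ => ?_⟩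
  · rw [lucky_competitionRank, image_univ_of_surjective hf, card_fin]
  · rw [isFubini_iff_competitionRank_eq] at hα
    rw [← hα, lucky_competitionRank] at hk
    obtain ⟨f, hf, hfα⟩ := exists_surjective_competitionRank_eq hk
    rw [hα] at hfα
    exact ⟨f, ⟨hf, isUnit2_competitionRank_iff.1 (hfα ▸ hα₂)⟩, hfα⟩

theorem card_unitFubini_lucky_eq_card_surjective (n k : ℕ) :
    Nat.card {α : Fin n → Fin n // IsFubini α ∧ IsUnit2 α ∧ lucky α = k} =
      Nat.card {f : Fin n → Fin k // Surjective f ∧ ∀ b, #{i | f i = b} ≤ 2} :=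
  (Nat.card_congr (bijOn_competitionRank n k).equiv).symm

end CompetitionRank

end UnitFubini

/-- For `1 ≤ k ≤ n`, the number `f_UFR(n,k)` of unit Fubini rankings
with `n` competitors having exactly `k` lucky cars satisfies
`2^(n−k) · f_UFR(n,k) = n! · C(k, n−k)`. -/
theorem card_unit_fubini_lucky (n k : ℕ) (hn : 1 ≤ n) (hk : 1 ≤ k) (hkn : k ≤ n) :
    2 ^ (n - k) *
        Nat.card {α : Fin n → Fin n // IsFubini α ∧ IsUnit2 α ∧ lucky α = k}
      = Nat.factorial n * Nat.choose k (n - k) := by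
  obtain ⟨j, rfl⟩ := Nat.exists_eq_add_of_le hkn
  have hcard : Fintype.card (Fin (k + j)) = Fintype.card (Fin k) + j := by
    simp only [Fintype.card_fin]
  rw [Nat.add_sub_cancel_left, UnitFubini.card_unitFubini_lucky_eq_card_surjective]
  simpa only [Fintype.card_fin] using
    UnitFubini.two_pow_mul_card_surjective_card_fiber_le_two hcard
end

section
/- For all n ≥ 1 and 1 ≤ k ≤ n, the number of unit Fubini rankings with n competitors having exactly k lucky cars equals k!·S_{≤2}(n,k), where S_{≤2}(n,k) is the number of partitions of an n-element set into k nonempty blocks each of size at most 2. -/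
/-- `S_{≤2}(n,k)`: the number of partitions of an `n`-element set into `k` nonempty
blocks, each of size at most `2`. -/
noncomputable def stirlingLe2 (n k : ℕ) : ℕ :=
  Nat.card {P : Finset (Finset (Fin n)) //
    P.card = k ∧ (∀ B ∈ P, B.Nonempty ∧ B.card ≤ 2) ∧
      ∀ i : Fin n, ∃! B : Finset (Fin n), B ∈ P ∧ i ∈ B}

/-! The distinct ranks of a Fubini ranking, each first taken by exactly one lucky car, can be
renumbered increasingly by `0, …, k - 1`. This gives a surjection onto `Fin k` with the same blocks
of tied competitors, and the ranking is recovered by counting the competitors with a smaller value.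
A surjection onto `Fin k` is in turn a partition into `k` blocks together with one of the `k!`
labellings of its blocks. -/

open Finset Function

section WeakOrder

variable {ι β γ : Type*} [LinearOrder β] [LinearOrder γ]

theorem eq_iff_eq_of_lt_iff_lt {f : ι → β} {g : ι → γ} (h : ∀ i j, f i < f j ↔ g i < g j)
    (i j : ι) : f i = f j ↔ g i = g j := by
  simp only [le_antisymm_iff, ← not_lt, h]

theorem eq_of_surjective_of_lt_iff_lt [WellFoundedLT β] {f g : ι → β} (hf : Surjective f)
    (hg : Surjective g) (h : ∀ i j, f i < f j ↔ g i < g j) : f = g := by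
  have hcomp (i : ι) : g (surjInv hf (f i)) = g i :=
    (eq_iff_eq_of_lt_iff_lt h _ _).1 (surjInv_eq hf _)
  have hmono : StrictMono (g ∘ surjInv hf) := fun b c hbc =>
    (h _ _).1 (by rwa [surjInv_eq hf, surjInv_eq hf])
  have hsurj : Surjective (g ∘ surjInv hf) := hg.forall.2 fun i => ⟨f i, hcomp i⟩
  have hid : g ∘ surjInv hf = id :=
    (hmono.range_inj strictMono_id).1 (by rw [hsurj.range_eq, Set.range_id])
  exact funext fun i => (congrFun hid (f i)).symm.trans (hcomp i)

theorem exists_surjective_fin_lt_iff_lt [Fintype ι] (f : ι → β) {k : ℕ}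
    (hk : #(univ.image f) = k) :
    ∃ g : ι → Fin k, Surjective g ∧ ∀ i j, g i < g j ↔ f i < f j := by
  let e : Fin k ≃o univ.image f := (univ.image f).orderIsoOfFin hk
  refine ⟨fun i => e.symm ⟨f i, mem_image_of_mem f (mem_univ i)⟩, fun c => ?_, fun i j => ?_⟩
  · obtain ⟨i, -, hi⟩ := mem_image.1 (e c).2
    exact ⟨i, e.symm_apply_eq.2 (Subtype.ext hi)⟩
  · rw [e.symm.lt_iff_lt, Subtype.mk_lt_mk]

end WeakOrder

theorem card_filter_first_occurrence {ι β : Type*} [Fintype ι] [LinearOrder ι] [DecidableEq β]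
    (f : ι → β) [DecidablePred fun i => ∀ j < i, f j ≠ f i] :
    #{i | ∀ j < i, f j ≠ f i} = #(univ.image f) := by
  refine card_nbij f (fun i _ => mem_image_of_mem f (mem_univ i)) ?_ ?_
  · intro i hi j hj hij
    simp only [coe_filter, mem_univ, true_and, Set.mem_ofPred_eq] at hi hj
    exact le_antisymm (le_of_not_gt fun hji => hi j hji hij.symm)
      (le_of_not_gt fun hij' => hj i hij' hij)
  · intro b hb
    obtain ⟨i₀, -, hi₀⟩ := mem_image.1 hb
    obtain ⟨i, hi, hmin⟩ := wellFounded_lt.has_min {i | f i = b} ⟨i₀, hi₀⟩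
    refine ⟨i, ?_, hi⟩
    simp only [coe_filter, mem_univ, true_and, Set.mem_ofPred_eq]
    exact fun j hji hj => hmin j (hj.trans hi) hji

section Ranking

variable {n : ℕ} {β γ : Type*} [LinearOrder β] [LinearOrder γ]

/-- The Fubini ranking of the competitors by their scores `f`, lower scores being better. Ranks
start at `0`, as in `IsFubini`: the rank of `i` is the number of competitors strictly ahead. -/
def rankOf (f : Fin n → β) (i : Fin n) : Fin n :=
  ⟨#{j | f j < f i}, by
    simpa using card_lt_card (filter_ssubset.2 ⟨i, mem_univ i, lt_irrefl (f i)⟩)⟩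

theorem rankOf_lt_rankOf (f : Fin n → β) (i j : Fin n) :
    rankOf f i < rankOf f j ↔ f i < f j := by
  have hmono {a b : Fin n} (hab : f a ≤ f b) :
      ({c | f c < f a} : Finset (Fin n)) ⊆ ({c | f c < f b} : Finset (Fin n)) :=
    monotone_filter_right _ fun _ _ hc => lt_of_lt_of_le hc hab
  refine ⟨fun h => lt_of_not_ge fun hji => h.not_ge (card_le_card (hmono hji)), fun h => ?_⟩
  exact card_lt_card ((ssubset_iff_of_subset (hmono h.le)).2 ⟨i, by simpa using h, by simp⟩)

theorem rankOf_inj (f : Fin n → β) (i j : Fin n) : rankOf f i = rankOf f j ↔ f i = f j :=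
  eq_iff_eq_of_lt_iff_lt (rankOf_lt_rankOf f) i j

theorem rankOf_congr {f : Fin n → β} {g : Fin n → γ} (h : ∀ i j, f i < f j ↔ g i < g j) :
    rankOf f = rankOf g := by
  simp only [funext_iff, rankOf, h, implies_true]

theorem isFubini_iff_rankOf_eq {α : Fin n → Fin n} : IsFubini α ↔ rankOf α = α := by
  refine ⟨fun h => funext fun i => Fin.ext (h (α i) ⟨i, rfl⟩), fun h => ?_⟩
  rintro _ ⟨i, rfl⟩
  exact congrArg Fin.val (congrFun h i)

theorem isFubini_rankOf (f : Fin n → β) : IsFubini (rankOf f) :=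
  isFubini_iff_rankOf_eq.2 (rankOf_congr (rankOf_lt_rankOf f))

theorem lucky_eq_card_image (α : Fin n → Fin n) : lucky α = #(univ.image α) :=
  card_filter_first_occurrence α

theorem lucky_rankOf (f : Fin n → β) : lucky (rankOf f) = #(univ.image f) := by
  rw [← card_filter_first_occurrence f, lucky, luckySet]
  simp only [ne_eq, rankOf_inj]

theorem card_fubini_eq_card_surjective (k : ℕ) (p : Finset (Fin n) → Prop) :
    Nat.card {α : Fin n → Fin n // IsFubini α ∧ (∀ i, p {j | α j = α i}) ∧ lucky α = k} =
      Nat.card {f : Fin n → Fin k // Surjective f ∧ ∀ i, p {j | f j = f i}} := by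
  symm
  refine Nat.card_eq_of_bijective (fun f => ⟨rankOf f.1, isFubini_rankOf f.1, ?_, ?_⟩) ⟨?_, ?_⟩
  · simpa only [rankOf_inj] using f.2.2
  · rw [lucky_rankOf, image_univ_of_surjective f.2.1, card_univ, Fintype.card_fin]
  · intro f g hfg
    have hrank : rankOf f.1 = rankOf g.1 := congrArg Subtype.val hfg
    refine Subtype.ext (eq_of_surjective_of_lt_iff_lt f.2.1 g.2.1 fun i j => ?_)
    rw [← rankOf_lt_rankOf, hrank, rankOf_lt_rankOf]
  · rintro ⟨α, hα, hp, hk⟩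
    obtain ⟨f, hf, hlt⟩ :=
      exists_surjective_fin_lt_iff_lt α ((lucky_eq_card_image α).symm.trans hk)
    refine ⟨⟨f, hf, ?_⟩, Subtype.ext ((rankOf_congr hlt).trans (isFubini_iff_rankOf_eq.1 hα))⟩
    simpa only [eq_iff_eq_of_lt_iff_lt hlt] using hp

end Ranking

section Labelling

variable {ι κ : Type*} [Fintype ι] [DecidableEq ι]

/-- The function sending each point to the label of its part, for a partition `P` whose parts are
labelled bijectively by `κ`. -/
def partLabel (P : Finpartition (univ : Finset ι)) (e : κ ≃ P.parts) (i : ι) : κ :=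
  e.symm ⟨P.part i, P.part_mem.2 (mem_univ i)⟩

theorem partLabel_eq_iff {P : Finpartition (univ : Finset ι)} {e : κ ≃ P.parts} {i : ι} {c : κ} :
    partLabel P e i = c ↔ i ∈ (e c : Finset ι) := by
  rw [partLabel, Equiv.symm_apply_eq, Subtype.ext_iff, P.part_eq_iff_mem (e c).2]

theorem partLabel_surjective (P : Finpartition (univ : Finset ι)) (e : κ ≃ P.parts) :
    Surjective (partLabel P e) := fun c =>
  (P.nonempty_of_mem_parts (e c).2).imp fun _ => partLabel_eq_iff.2

theorem filter_partLabel_eq [DecidableEq κ] (P : Finpartition (univ : Finset ι))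
    (e : κ ≃ P.parts) (c : κ) : ({i | partLabel P e i = c} : Finset ι) = e c := by
  ext i
  rw [mem_filter_univ, partLabel_eq_iff]

theorem forall_mem_parts_iff_partLabel [DecidableEq κ] {P : Finpartition (univ : Finset ι)}
    (e : κ ≃ P.parts) (p : Finset ι → Prop) :
    (∀ B ∈ P.parts, p B) ↔ ∀ i, p {j | partLabel P e j = partLabel P e i} := by
  rw [← (partLabel_surjective P e).forall (p := fun c => p {j | partLabel P e j = c})]
  simp only [filter_partLabel_eq, e.forall_congr_left, Equiv.apply_symm_apply, Subtype.forall]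

theorem partLabel_injective :
    Injective fun x : Σ P : Finpartition (univ : Finset ι), κ ≃ P.parts =>
      partLabel x.1 x.2 := by
  rintro ⟨P, e⟩ ⟨Q, e'⟩ (h : partLabel P e = partLabel Q e')
  have hblock (c : κ) : (e c : Finset ι) = e' c := by
    ext i
    rw [← partLabel_eq_iff, h, partLabel_eq_iff]
  obtain rfl : P = Q := by
    refine Finpartition.ext (Finset.ext fun B => ⟨fun hB => ?_, fun hB => ?_⟩)
    · simpa [← hblock] using (e' (e.symm ⟨B, hB⟩)).2
    · simpa [hblock] using (e (e'.symm ⟨B, hB⟩)).2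
  rw [Equiv.ext fun c => Subtype.ext (hblock c)]

theorem exists_partLabel_eq {f : ι → κ} (hf : Surjective f) :
    ∃ (P : Finpartition (univ : Finset ι)) (e : κ ≃ P.parts), partLabel P e = f := by
  classical
  let P := Finpartition.ofSetoid (Setoid.ker f)
  have hparts (B : Finset ι) : B ∈ P.parts ↔ ∃ c, ({i | c = f i} : Finset ι) = B := by
    simp only [P, Finpartition.ofSetoid, Finpartition.ofSetSetoid_parts, mem_image, mem_univ,
      true_and, hf.exists, Setoid.ker_def]
  let fibre (c : κ) : P.parts := ⟨({i | c = f i} : Finset ι), (hparts _).2 ⟨c, rfl⟩⟩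
  have hfibre : Bijective fibre := by
    refine ⟨fun c d hcd => ?_, fun ⟨B, hB⟩ => ((hparts B).1 hB).imp fun c => Subtype.ext⟩
    obtain ⟨i, rfl⟩ := hf c
    have hi : i ∈ (fibre d : Finset ι) := hcd ▸ (mem_filter_univ i).2 rfl
    exact ((mem_filter_univ i).1 hi).symm
  refine ⟨P, Equiv.ofBijective fibre hfibre, funext fun i => partLabel_eq_iff.2 ?_⟩
  exact (mem_filter_univ i).2 rfl

theorem card_surjective_eq_factorial_mul_card_finpartition [Fintype κ] [DecidableEq κ]
    (p : Finset ι → Prop) :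
    Nat.card {f : ι → κ // Surjective f ∧ ∀ i, p {j | f j = f i}} =
      (Fintype.card κ).factorial *
        Nat.card {P : Finpartition (univ : Finset ι) //
          #P.parts = Fintype.card κ ∧ ∀ B ∈ P.parts, p B} := by
  classical
  let Q := {P : Finpartition (univ : Finset ι) // #P.parts = Fintype.card κ ∧ ∀ B ∈ P.parts, p B}
  let label (x : Σ P : Q, κ ≃ P.1.parts) : {f : ι → κ // Surjective f ∧ ∀ i, p {j | f j = f i}} :=
    ⟨partLabel x.1.1 x.2, partLabel_surjective _ _,
      (forall_mem_parts_iff_partLabel x.2 p).1 x.1.2.2⟩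
  have hlabel : Bijective label := by
    refine ⟨fun x y hxy => ?_, fun ⟨f, hf, hp⟩ => ?_⟩
    · exact Subtype.val_injective.sigma_map (fun _ => injective_id)
        (partLabel_injective (congrArg Subtype.val hxy))
    · obtain ⟨P, e, rfl⟩ := exists_partLabel_eq hf
      have hcard : #P.parts = Fintype.card κ := by
        rw [← Fintype.card_coe, Fintype.card_congr e]
      exact ⟨⟨⟨P, hcard, (forall_mem_parts_iff_partLabel e p).2 hp⟩, e⟩, rfl⟩
  have hequiv (P : Q) : Nat.card (κ ≃ P.1.parts) = (Fintype.card κ).factorial := by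
    have e : κ ≃ P.1.parts := Fintype.equivOfCardEq (by rw [Fintype.card_coe, P.2.1])
    rw [Nat.card_eq_fintype_card, Fintype.card_equiv e]
  rw [← Nat.card_eq_of_bijective label hlabel, Nat.card_sigma, sum_congr rfl fun P _ => hequiv P,
    sum_const, card_univ, smul_eq_mul, mul_comm, Nat.card_eq_fintype_card]

end Labelling

theorem stirlingLe2_eq_card_finpartition (n k : ℕ) :
    stirlingLe2 n k =
      Nat.card {P : Finpartition (univ : Finset (Fin n)) //
        #P.parts = k ∧ ∀ B ∈ P.parts, #B ≤ 2} := by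
  symm
  refine Nat.card_eq_of_bijective (fun P => ⟨P.1.parts, P.2.1, fun B hB =>
    ⟨P.1.nonempty_of_mem_parts hB, P.2.2 B hB⟩, fun i => P.1.existsUnique_mem (mem_univ i)⟩)
    ⟨fun P Q hPQ => Subtype.ext (Finpartition.ext (congrArg Subtype.val hPQ)), ?_⟩
  rintro ⟨P, hcard, hP, hunique⟩
  exact ⟨⟨Finpartition.ofExistsUnique P (fun B _ => subset_univ B) (fun i _ => hunique i)
    fun h => not_nonempty_empty (hP ∅ h).1, hcard, fun B hB => (hP B hB).2⟩, rfl⟩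

theorem isUnit2_iff_forall_card_le {n : ℕ} {α : Fin n → Fin n} :
    IsUnit2 α ↔ ∀ i, #{j | α j = α i} ≤ 2 := by
  refine ⟨fun h i => h (α i), fun h r => ?_⟩
  rcases ({j | α j = r} : Finset (Fin n)).eq_empty_or_nonempty with hr | ⟨i, hi⟩
  · simp [hr]
  · obtain rfl : α i = r := by simpa using hi
    exact h i

theorem card_unit_fubini_eq_factorial_mul_stirlingLe2_general
    (n k : ℕ) (p : Finset (Fin n) → Prop) :
    Nat.card {α : Fin n → Fin n // IsFubini α ∧ (∀ i, p {j | α j = α i}) ∧ lucky α = k} =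
      k.factorial *
        Nat.card {P : Finpartition (univ : Finset (Fin n)) //
          #P.parts = k ∧ ∀ B ∈ P.parts, p B} := by
  rw [card_fubini_eq_card_surjective, card_surjective_eq_factorial_mul_card_finpartition,
    Fintype.card_fin]

/-- For `1 ≤ k ≤ n`, the number of unit Fubini rankings with `n`
competitors having exactly `k` lucky cars equals `k! · S_{≤2}(n,k)`. -/
theorem card_unit_fubini_eq_factorial_mul_stirlingLe2
    (n k : ℕ) (hn : 1 ≤ n) (hk : 1 ≤ k) (hkn : k ≤ n) :
    Nat.card {α : Fin n → Fin n // IsFubini α ∧ IsUnit2 α ∧ lucky α = k}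
      = Nat.factorial k * stirlingLe2 n k := by
  simpa only [isUnit2_iff_forall_card_le, stirlingLe2_eq_card_finpartition] using
    card_unit_fubini_eq_factorial_mul_stirlingLe2_general n k (#· ≤ 2)
end

section
/- For every integer n ≥ 0 and every real number x with 1 + 4x > 0, one has ∑_{k=0}^{⌊n/2⌋} x^k·C(n−k, k) = (1/√(1+4x))·( ((1 + √(1+4x))/2)^{n+1} − ((1 − √(1+4x))/2)^{n+1} ), where C(n−k,k) denotes the binomial coefficient. -/
/-!
Pascal's rule gives the diagonal sums `Sₙ` the recurrence `Sₙ₊₂ = Sₙ₊₁ + x Sₙ`. A root `a` of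
`t ^ 2 = t + x` makes `aⁿ` satisfy the same recurrence, so for two roots `a` and `b` the sequences
`(a - b) Sₙ` and `aⁿ⁺¹ - bⁿ⁺¹` agree as soon as they agree at `n = 0, 1`. The roots are
`(1 ± √(1 + 4x)) / 2`, and their difference is `√(1 + 4x)`.
-/

section Semiring

open Finset.HasAntidiagonal (antidiagonal)

variable {R : Type*} [Semiring R] (x : R)

/-- The sum of `x ^ j * C(i, j)` over a diagonal `i + j = n` of Pascal's triangle. Summing over the
whole antidiagonal instead of `j ≤ n / 2` only adds zero terms, and keeps floors and truncated
subtraction out of the recurrence. -/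
def diagonalChooseSum (n : ℕ) : R :=
  ∑ p ∈ antidiagonal n, x ^ p.2 * (p.1.choose p.2 : R)

lemma sum_range_half_pow_mul_choose_eq_diagonalChooseSum (n : ℕ) :
    ∑ k ∈ Finset.range (n / 2 + 1), x ^ k * ((n - k).choose k : R) = diagonalChooseSum x n := by
  rw [diagonalChooseSum, ← Finset.Nat.sum_antidiagonal_swap,
    Finset.Nat.sum_antidiagonal_eq_sum_range_succ_mk]
  refine Finset.sum_subset (Finset.range_subset_range.2 (by omega)) fun k _ hk => ?_
  have hlt : n - k < k := by
    rw [Finset.mem_range] at hk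
    omega
  simp [Nat.choose_eq_zero_of_lt hlt]

@[simp]
lemma diagonalChooseSum_zero : diagonalChooseSum x 0 = 1 := by
  simp [diagonalChooseSum]

@[simp]
lemma diagonalChooseSum_one : diagonalChooseSum x 1 = 1 := by
  simp [diagonalChooseSum, Finset.Nat.sum_antidiagonal_succ]

lemma diagonalChooseSum_succ (n : ℕ) :
    diagonalChooseSum x (n + 1) =
      1 + ∑ p ∈ antidiagonal n, x ^ (p.2 + 1) * (p.1.choose (p.2 + 1) : R) := by
  simp [diagonalChooseSum, Finset.Nat.sum_antidiagonal_succ']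

lemma diagonalChooseSum_add_two (n : ℕ) :
    diagonalChooseSum x (n + 2) = diagonalChooseSum x (n + 1) + x * diagonalChooseSum x n := by
  have pascal (p : ℕ × ℕ) : x ^ (p.2 + 1) * ((p.1 + 1).choose (p.2 + 1) : R) =
      x ^ (p.2 + 1) * (p.1.choose (p.2 + 1) : R) + x * (x ^ p.2 * (p.1.choose p.2 : R)) := by
    rw [Nat.choose_succ_succ', Nat.cast_add, mul_add, add_comm, ← mul_assoc x, ← pow_succ']
  calc diagonalChooseSum x (n + 2)
    _ = 1 + ∑ p ∈ antidiagonal n, x ^ (p.2 + 1) * ((p.1 + 1).choose (p.2 + 1) : R) := by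
      simp [diagonalChooseSum_succ, Finset.Nat.sum_antidiagonal_succ]
    _ = 1 + ∑ p ∈ antidiagonal n, x ^ (p.2 + 1) * (p.1.choose (p.2 + 1) : R) +
        x * diagonalChooseSum x n := by
      simp only [pascal, Finset.sum_add_distrib, ← Finset.mul_sum, add_assoc, diagonalChooseSum]
    _ = diagonalChooseSum x (n + 1) + x * diagonalChooseSum x n := by
      rw [diagonalChooseSum_succ]

end Semiring

lemma sub_mul_diagonalChooseSum {R : Type*} [CommRing R] {a b x : R}
    (ha : a ^ 2 = a + x) (hb : b ^ 2 = b + x) (n : ℕ) :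
    (a - b) * diagonalChooseSum x n = a ^ (n + 1) - b ^ (n + 1) := by
  induction n using Nat.twoStepInduction with
  | zero => simp
  | one =>
    rw [diagonalChooseSum_one]
    linear_combination hb - ha
  | more n ih₀ ih₁ =>
    rw [diagonalChooseSum_add_two]
    linear_combination ih₁ + x * ih₀ - a ^ (n + 1) * ha + b ^ (n + 1) * hb

theorem sum_binomial_diagonal_closed_form_general {K : Type*} [Field K] [NeZero (2 : K)]
    (n : ℕ) {x s : K} (hs : s ^ 2 = 1 + 4 * x) (hs₀ : s ≠ 0) :
    ∑ k ∈ Finset.range (n / 2 + 1), x ^ k * ((n - k).choose k : K) =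
      1 / s * (((1 + s) / 2) ^ (n + 1) - ((1 - s) / 2) ^ (n + 1)) := by
  have h₂ : (2 : K) ≠ 0 := two_ne_zero
  have root_add : ((1 + s) / 2) ^ 2 = (1 + s) / 2 + x := by
    field_simp
    linear_combination hs
  have root_sub : ((1 - s) / 2) ^ 2 = (1 - s) / 2 + x := by
    field_simp
    linear_combination hs
  have root_diff : (1 + s) / 2 - (1 - s) / 2 = s := by
    field_simp
    ring
  rw [sum_range_half_pow_mul_choose_eq_diagonalChooseSum,
    ← sub_mul_diagonalChooseSum root_add root_sub, root_diff, one_div, inv_mul_cancel_left₀ hs₀]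

/-- For every integer `n ≥ 0` and real `x` with `1 + 4x > 0`,
`∑_{k=0}^{⌊n/2⌋} xᵏ·C(n−k,k)
  = (1/√(1+4x))·(((1+√(1+4x))/2)^(n+1) − ((1−√(1+4x))/2)^(n+1))`. -/
theorem sum_binomial_diagonal_closed_form (n : ℕ) (x : ℝ) (hx : 1 + 4 * x > 0) :
    ∑ k ∈ Finset.range (n / 2 + 1), x ^ k * (Nat.choose (n - k) k : ℝ)
      = (1 / Real.sqrt (1 + 4 * x)) *
          (((1 + Real.sqrt (1 + 4 * x)) / 2) ^ (n + 1)
            - ((1 - Real.sqrt (1 + 4 * x)) / 2) ^ (n + 1)) :=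
  sum_binomial_diagonal_closed_form_general n (Real.sq_sqrt hx.le) (Real.sqrt_pos.2 hx).ne'
end

section
/- For every n ≥ 1, the number of weakly increasing unit Fubini rankings with n competitors equals the Fibonacci number F_{n+1}, where F_1 = F_2 = 1 and F_{m+1} = F_m + F_{m−1}. -/
/-!
A weakly increasing Fubini ranking satisfies `α j < α i ↔ j < α i`: the competitors ranked better
than a given rank form an initial segment, whose size is prescribed. If moreover at most two
competitors share a rank, each entry is `α i = i` or `α i = i - 1`, and `α` is determined by the
set of positions that tie with the next one. These sets are exactly those without two consecutive
elements, which the Fibonacci recurrence counts according to whether the largest allowed element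
is present.
-/

/-- A set of natural numbers is sparse if it contains no two consecutive numbers. -/
def IsSparse (s : Finset ℕ) : Prop := ∀ i ∈ s, i + 1 ∉ s

instance : DecidablePred IsSparse := fun s =>
  inferInstanceAs (Decidable (∀ i ∈ s, i + 1 ∉ s))

/-- The sparse subsets of `{0, …, n - 1}`. -/
def sparseSubsets (n : ℕ) : Finset (Finset ℕ) := (Finset.range n).powerset.filter IsSparse

theorem mem_sparseSubsets {n : ℕ} {s : Finset ℕ} :
    s ∈ sparseSubsets n ↔ s ⊆ Finset.range n ∧ IsSparse s := by
  rw [sparseSubsets, Finset.mem_filter, Finset.mem_powerset]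

theorem notMem_of_mem_sparseSubsets {n k : ℕ} {s : Finset ℕ} (hs : s ∈ sparseSubsets n)
    (hk : n ≤ k) : k ∉ s := fun hks =>
  (Finset.mem_range.1 ((mem_sparseSubsets.1 hs).1 hks)).not_ge hk

theorem sparseSubsets_add_two (n : ℕ) :
    sparseSubsets (n + 2) =
      sparseSubsets (n + 1) ∪ (sparseSubsets n).image (insert (n + 1)) := by
  ext s
  simp only [Finset.mem_union, Finset.mem_image, mem_sparseSubsets, IsSparse]
  constructor
  · rintro ⟨hsub, hs⟩
    by_cases hn : n + 1 ∈ s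
    · refine Or.inr ⟨s.erase (n + 1), ⟨fun i hi => ?_, by grind⟩, Finset.insert_erase hn⟩
      have hne : i ≠ n := by
        rintro rfl
        exact hs i (Finset.mem_of_mem_erase hi) hn
      grind
    · exact Or.inl ⟨by grind, hs⟩
  · rintro (⟨hsub, hs⟩ | ⟨t, ⟨hsub, ht⟩, rfl⟩) <;> grind

theorem card_sparseSubsets (n : ℕ) : (sparseSubsets n).card = Nat.fib (n + 2) := by
  induction n using Nat.twoStepInduction with
  | zero => rfl
  | one => rfl
  | more n ih₀ ih₁ =>
    have hdisj : Disjoint (sparseSubsets (n + 1))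
        ((sparseSubsets n).image (insert (n + 1))) := by
      refine Finset.disjoint_left.2 fun s hs hs' => ?_
      obtain ⟨t, -, rfl⟩ := Finset.mem_image.1 hs'
      exact notMem_of_mem_sparseSubsets hs le_rfl (Finset.mem_insert_self _ _)
    have hinj : Set.InjOn (insert (n + 1)) (sparseSubsets n : Set (Finset ℕ)) :=
      (Finset.insert_erase_invOn (a := n + 1)).2.injOn.mono fun s hs =>
        notMem_of_mem_sparseSubsets hs n.le_succ
    rw [sparseSubsets_add_two, Finset.card_union_of_disjoint hdisj,
      Finset.card_image_of_injOn hinj, ih₀, ih₁, Nat.fib_add_two (n := n + 2), add_comm]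

theorem eq_of_isLowerSet_of_card_eq {ι : Type*} [LinearOrder ι] {s t : Finset ι}
    (hs : IsLowerSet (s : Set ι)) (ht : IsLowerSet (t : Set ι)) (h : s.card = t.card) :
    s = t := by
  rcases hs.total ht with hst | hts
  · exact Finset.eq_of_subset_of_card_le (Finset.coe_subset.1 hst) h.ge
  · exact (Finset.eq_of_subset_of_card_le (Finset.coe_subset.1 hts) h.le).symm

section MonotoneFubini

variable {n : ℕ} {α : Fin n → Fin n}

theorem IsFubini.apply_lt_apply_iff (hF : IsFubini α) (hM : Monotone α) (i j : Fin n) :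
    α j < α i ↔ j < α i := by
  have hIio : Finset.univ.filter (fun k => α k < α i) = Finset.Iio (α i) := by
    apply eq_of_isLowerSet_of_card_eq
    · rw [Finset.coe_filter_univ]
      exact (isLowerSet_Iio (α i)).preimage hM
    · rw [Finset.coe_Iio]
      exact isLowerSet_Iio (α i)
    · rw [hF (α i) ⟨i, rfl⟩, Fin.card_Iio]
  simpa using Finset.ext_iff.1 hIio j

theorem isFubini_and_monotone_iff :
    IsFubini α ∧ Monotone α ↔ ∀ i j, α j < α i ↔ j < α i := by
  refine ⟨fun h => h.1.apply_lt_apply_iff h.2, fun h => ⟨?_, fun i j hij => ?_⟩⟩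
  · rintro _ ⟨i, rfl⟩
    simp only [h i, Finset.filter_gt_eq_Iio, Fin.card_Iio]
  · exact not_lt.1 fun hlt => (h i i).not.1 (lt_irrefl _) (hij.trans_lt ((h i j).1 hlt))

theorem IsFubini.apply_le_self (hF : IsFubini α) (hM : Monotone α) (i : Fin n) : α i ≤ i :=
  not_lt.1 ((hF.apply_lt_apply_iff hM i i).not.1 (lt_irrefl _))

theorem IsFubini.isUnit2_iff (hF : IsFubini α) (hM : Monotone α) :
    IsUnit2 α ↔ ∀ i : Fin n, (i : ℕ) ≤ α i + 1 := by
  have hle := hF.apply_le_self hM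
  constructor
  · intro hU i
    have hsub : Finset.Icc (α i) i ⊆ Finset.univ.filter (fun j => α j = α i) := by
      intro j hj
      obtain ⟨hij, hji⟩ := Finset.mem_Icc.1 hj
      have hge : α i ≤ α j := not_lt.1 ((hF.apply_lt_apply_iff hM i j).not.2 hij.not_gt)
      exact Finset.mem_filter.2 ⟨Finset.mem_univ j, (hM hji).antisymm hge⟩
    have hcard := (Finset.card_le_card hsub).trans (hU (α i))
    rw [Fin.card_Icc] at hcard
    omega
  · intro h r
    have hmaps : Set.MapsTo Fin.val (Finset.univ.filter (fun i => α i = r) : Set (Fin n))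
        (Finset.Icc (r : ℕ) (r + 1) : Set ℕ) := by
      intro i hi
      obtain rfl : α i = r := by simpa using hi
      exact Finset.mem_coe.2 (Finset.mem_Icc.2 ⟨hle i, h i⟩)
    calc (Finset.univ.filter (fun i => α i = r)).card
        ≤ (Finset.Icc (r : ℕ) (r + 1)).card :=
          Finset.card_le_card_of_injOn Fin.val hmaps Fin.val_injective.injOn
      _ = 2 := by rw [Nat.card_Icc]; omega

end MonotoneFubini

section Ties

variable {m : ℕ} {α : Fin (m + 1) → Fin (m + 1)} {s : Finset ℕ}

/-- The positions `i` whose entry agrees with the next one. In a weakly increasing ranking these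
are the ties between neighbours, and they generate all ties. -/
def tieSet (α : Fin (m + 1) → Fin (m + 1)) : Finset ℕ :=
  (Finset.univ.filter fun i : Fin m => α i.succ = α i.castSucc).map Fin.valEmbedding

theorem val_mem_tieSet {i : Fin m} : (i : ℕ) ∈ tieSet α ↔ α i.succ = α i.castSucc := by
  simp [tieSet, ← Fin.ext_iff]

theorem tieSet_subset_range : tieSet α ⊆ Finset.range m := by
  intro k hk
  obtain ⟨i, -, rfl⟩ := Finset.mem_map.1 hk
  exact Finset.mem_range.2 i.isLt

theorem IsFubini.val_mem_tieSet_iff_ne (hF : IsFubini α) (hM : Monotone α) {i : Fin m} :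
    (i : ℕ) ∈ tieSet α ↔ α i.succ ≠ i.succ := by
  rw [val_mem_tieSet]
  constructor
  · intro htie
    have hle : α i.succ ≤ i.castSucc := htie.trans_le (hF.apply_le_self hM i.castSucc)
    exact (hle.trans_lt i.castSucc_lt_succ).ne
  · intro hne
    have hle : α i.succ ≤ i.castSucc :=
      Fin.le_castSucc_iff.2 ((hF.apply_le_self hM i.succ).lt_of_ne hne)
    have hle' : α i.succ ≤ α i.castSucc :=
      not_lt.1 ((hF.apply_lt_apply_iff hM i.succ i.castSucc).not.2 hle.not_gt)
    exact hle'.antisymm (hM i.castSucc_lt_succ.le)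

theorem IsFubini.isSparse_tieSet (hF : IsFubini α) (hU : IsUnit2 α) (hM : Monotone α) :
    IsSparse (tieSet α) := by
  intro k hk hk'
  have hlt : k + 1 < m := Finset.mem_range.1 (tieSet_subset_range hk')
  let i : Fin m := ⟨k, by omega⟩
  let j : Fin m := ⟨k + 1, hlt⟩
  have hi : α i.succ = α i.castSucc := val_mem_tieSet.1 hk
  have hj : α j.succ = α i.succ := val_mem_tieSet.1 hk'
  have hle : (α j.succ : ℕ) ≤ k := by
    rw [hj, hi]
    exact hF.apply_le_self hM i.castSucc
  have hge : k + 2 ≤ (α j.succ : ℕ) + 1 := (hF.isUnit2_iff hM).1 hU j.succ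
  omega

/-- The sequence on `{0, …, m}` in which position `i + 1` receives rank `i` if `i ∈ s` and its own
rank `i + 1` otherwise. For sparse subsets of `{0, …, m - 1}` this is inverse to `tieSet`. -/
def rankingOfTies (m : ℕ) (s : Finset ℕ) : Fin (m + 1) → Fin (m + 1) :=
  Fin.cases 0 fun i => if (i : ℕ) ∈ s then i.castSucc else i.succ

theorem rankingOfTies_succ (i : Fin m) :
    rankingOfTies m s i.succ = if (i : ℕ) ∈ s then i.castSucc else i.succ := rfl

theorem IsFubini.rankingOfTies_tieSet (hF : IsFubini α) (hU : IsUnit2 α) (hM : Monotone α) :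
    rankingOfTies m (tieSet α) = α := by
  have hle := hF.apply_le_self hM
  funext i
  cases i using Fin.cases with
  | zero => exact (le_antisymm (hle 0) (Fin.zero_le _)).symm
  | succ i =>
    rw [rankingOfTies_succ]
    split_ifs with hi <;> rw [hF.val_mem_tieSet_iff_ne hM] at hi
    · have hle' : α i.succ ≤ i.castSucc := Fin.le_castSucc_iff.2 ((hle i.succ).lt_of_ne hi)
      have hge : (i : ℕ) + 1 ≤ α i.succ + 1 := (hF.isUnit2_iff hM).1 hU i.succ
      exact le_antisymm (Fin.le_def.2 (Nat.le_of_succ_le_succ hge)) hle'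
    · exact (not_not.1 hi).symm

theorem IsSparse.rankingOfTies_lt_rankingOfTies_iff (hs : IsSparse s) (i j : Fin (m + 1)) :
    rankingOfTies m s j < rankingOfTies m s i ↔ j < rankingOfTies m s i := by
  cases i using Fin.cases with
  | zero => simp [rankingOfTies]
  | succ i =>
    cases j using Fin.cases with
    | zero => rfl
    | succ j =>
      simp only [rankingOfTies_succ, Fin.lt_def]
      -- The equivalence could fail only for `j ∈ s` and `i = j + 1 ∈ s`, against sparsity.
      grind [IsSparse]

theorem IsSparse.isFubini_and_monotone_rankingOfTies (hs : IsSparse s) :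
    IsFubini (rankingOfTies m s) ∧ Monotone (rankingOfTies m s) :=
  isFubini_and_monotone_iff.2 hs.rankingOfTies_lt_rankingOfTies_iff

theorem IsSparse.isUnit2_rankingOfTies (hs : IsSparse s) : IsUnit2 (rankingOfTies m s) := by
  obtain ⟨hF, hM⟩ := hs.isFubini_and_monotone_rankingOfTies (m := m)
  refine (hF.isUnit2_iff hM).2 fun i => ?_
  cases i using Fin.cases with
  | zero => exact Nat.zero_le _
  | succ i =>
    rw [rankingOfTies_succ]
    split_ifs <;> simp

theorem tieSet_rankingOfTies (hs : s ∈ sparseSubsets m) : tieSet (rankingOfTies m s) = s := by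
  obtain ⟨hsub, hsparse⟩ := mem_sparseSubsets.1 hs
  obtain ⟨hF, hM⟩ := hsparse.isFubini_and_monotone_rankingOfTies (m := m)
  have hmem (i : Fin m) : (i : ℕ) ∈ tieSet (rankingOfTies m s) ↔ (i : ℕ) ∈ s := by
    rw [hF.val_mem_tieSet_iff_ne hM, rankingOfTies_succ]
    split_ifs with hi <;> simp [hi, i.castSucc_lt_succ.ne]
  ext k
  exact ⟨
    fun hk => (hmem ⟨k, Finset.mem_range.1 (tieSet_subset_range hk)⟩).1 hk,
    fun hk => (hmem ⟨k, Finset.mem_range.1 (hsub hk)⟩).2 hk⟩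

/-- A weakly increasing unit Fubini ranking is encoded by its set of ties. -/
def unitFubiniEquivSparseSubsets (m : ℕ) :
    {α : Fin (m + 1) → Fin (m + 1) // IsFubini α ∧ IsUnit2 α ∧ Monotone α} ≃
      sparseSubsets m where
  toFun := fun ⟨α, hF, hU, hM⟩ =>
    ⟨tieSet α, mem_sparseSubsets.2 ⟨tieSet_subset_range, hF.isSparse_tieSet hU hM⟩⟩
  invFun := fun ⟨s, hs⟩ =>
    have hsparse := (mem_sparseSubsets.1 hs).2
    have hFM := hsparse.isFubini_and_monotone_rankingOfTies
    ⟨rankingOfTies m s, hFM.1, hsparse.isUnit2_rankingOfTies, hFM.2⟩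
  left_inv := fun ⟨_, hF, hU, hM⟩ => Subtype.ext (hF.rankingOfTies_tieSet hU hM)
  right_inv := fun ⟨_, hs⟩ => Subtype.ext (tieSet_rankingOfTies hs)

end Ties

/-- The number of weakly increasing unit Fubini rankings with `n ≥ 1`
competitors equals the Fibonacci number `F_{n+1}` (with `F₁ = F₂ = 1`; in Mathlib's
convention `Nat.fib 1 = Nat.fib 2 = 1`). -/
theorem card_weakly_increasing_unit_fubini (n : ℕ) (hn : 1 ≤ n) :
    Nat.card {α : Fin n → Fin n // IsFubini α ∧ IsUnit2 α ∧ Monotone α}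
      = Nat.fib (n + 1) := by
  obtain ⟨m, rfl⟩ := Nat.exists_eq_add_of_le' hn
  rw [Nat.card_congr (unitFubiniEquivSparseSubsets m), Nat.card_eq_finsetCard,
    card_sparseSubsets]
end

section
/- Fix a real number q > 0 and set λ₁ = (q + √(q² + 4q))/2 and λ₂ = (q − √(q² + 4q))/2. Then for every real number x, the series ∑_{n≥0} S_n(q)·x^n/n!, where S_n(q) = ∑_{k=0}^{n} C(k, n−k)·q^k, converges and equals (λ₁·e^{λ₁ x} − λ₂·e^{λ₂ x})/(λ₁ − λ₂). (For n ≥ 1, S_n(q) is the lucky-count generating polynomial of weakly increasing unit Fubini rankings with n competitors, since the number of such rankings with exactly k lucky cars is C(k, n−k).) -/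
/-!
Pascal's rule gives `Sₙ₊₂ = q Sₙ₊₁ + q Sₙ`, and `λ₁`, `λ₂` are the roots of the characteristic
polynomial `t² - q t - q`, so `S₀ = 1` and `S₁ = q = λ₁ + λ₂` yield Binet's formula
`(λ₁ - λ₂) Sₙ = λ₁ⁿ⁺¹ - λ₂ⁿ⁺¹`. Multiplying by `xⁿ / n!` and summing leaves two exponential series.
-/

open Finset NormedSpace
open scoped Nat

theorem binet_of_recurrence {R : Type*} [CommRing R] {a b : R} {u : ℕ → R}
    (hu : ∀ n, u (n + 2) = (a + b) * u (n + 1) - a * b * u n) (n : ℕ) :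
    (a - b) * u n = (u 1 - b * u 0) * a ^ n - (u 1 - a * u 0) * b ^ n := by
  induction n using Nat.twoStepInduction with
  | zero => ring
  | one => ring
  | more n ih₀ ih₁ =>
    rw [hu]
    linear_combination (a + b) * ih₁ - a * b * ih₀

theorem hasSum_egf_of_recurrence {𝕜 : Type*} [NormedField 𝕜] [NormedAlgebra ℚ 𝕜]
    [CompleteSpace 𝕜] {a b : 𝕜} (hab : a ≠ b) {u : ℕ → 𝕜}
    (hu : ∀ n, u (n + 2) = (a + b) * u (n + 1) - a * b * u n) (x : 𝕜) :
    HasSum (fun n ↦ u n * x ^ n / n !)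
      (((u 1 - b * u 0) * exp (a * x) - (u 1 - a * u 0) * exp (b * x)) / (a - b)) := by
  have hexp (c r : 𝕜) : HasSum (fun n ↦ c * ((r * x) ^ n / n !)) (c * exp (r * x)) :=
    (expSeries_div_hasSum_exp (r * x)).mul_left c
  refine (((hexp _ a).sub (hexp _ b)).div_const (a - b)).congr_fun fun n ↦ ?_
  rw [eq_div_iff (sub_ne_zero.mpr hab)]
  linear_combination x ^ n / n ! * binet_of_recurrence hu n

/-- The lucky-count generating polynomial `Sₙ(q)` of the weakly increasing unit Fubini rankings
with `n` competitors, evaluated at `q`: such a ranking with `k` lucky cars has `k` distinct values,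
of which `n - k` are repeated. As `k ≤ n` throughout, the subtraction `n - k` never truncates. -/
def luckySum {R : Type*} [Semiring R] (q : R) (n : ℕ) : R :=
  ∑ k ∈ range (n + 1), (k.choose (n - k) : R) * q ^ k

section LuckySum

variable {R : Type*} (q : R)

theorem luckySum_eq_sum_antidiagonal [Semiring R] (n : ℕ) :
    luckySum q n = ∑ p ∈ antidiagonal n, (p.1.choose p.2 : R) * q ^ p.1 :=
  (Nat.sum_antidiagonal_eq_sum_range_succ (fun i j ↦ (i.choose j : R) * q ^ i) n).symm

theorem luckySum_zero [Semiring R] : luckySum q 0 = 1 := by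
  simp [luckySum]

theorem luckySum_one [Semiring R] : luckySum q 1 = q := by
  simp [luckySum, sum_range_succ]

theorem luckySum_add_two [CommSemiring R] (n : ℕ) :
    luckySum q (n + 2) = q * luckySum q (n + 1) + q * luckySum q n := by
  have pascal (i j : ℕ) : ((i + 1).choose (j + 1) : R) * q ^ (i + 1) =
      q * ((i.choose (j + 1) : R) * q ^ i) + q * ((i.choose j : R) * q ^ i) := by
    rw [Nat.choose_succ_succ']
    push_cast
    ring
  simp only [luckySum_eq_sum_antidiagonal]
  rw [Nat.sum_antidiagonal_succ, Nat.sum_antidiagonal_succ', Nat.sum_antidiagonal_succ']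
  simp only [pascal, sum_add_distrib, ← mul_sum, Nat.choose_zero_succ, Nat.choose_zero_right]
  push_cast
  ring

end LuckySum

theorem egf_weakly_increasing_unit_fubini_lucky_general {𝕜 : Type*} [NormedField 𝕜]
    [NormedAlgebra ℚ 𝕜] [CompleteSpace 𝕜] {q s lam1 lam2 : 𝕜} (hs : s ^ 2 = q ^ 2 + 4 * q)
    (hs₀ : s ≠ 0) (h1 : lam1 = (q + s) / 2) (h2 : lam2 = (q - s) / 2) (x : 𝕜) :
    HasSum (fun n ↦ luckySum q n * x ^ n / n !)
      ((lam1 * exp (lam1 * x) - lam2 * exp (lam2 * x)) / (lam1 - lam2)) := by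
  have : CharZero 𝕜 := algebraRat.charZero 𝕜
  have hadd : lam1 + lam2 = q := by rw [h1, h2]; ring
  have hmul : lam1 * lam2 = -q := by rw [h1, h2]; linear_combination -hs / 4
  have hsub : lam1 - lam2 = s := by rw [h1, h2]; ring
  have hrec (n : ℕ) : luckySum q (n + 2) =
      (lam1 + lam2) * luckySum q (n + 1) - lam1 * lam2 * luckySum q n := by
    rw [luckySum_add_two, hadd, hmul, neg_mul, sub_neg_eq_add]
  have hcoeff₁ : luckySum q 1 - lam2 * luckySum q 0 = lam1 := by
    rw [luckySum_one, luckySum_zero, mul_one, ← hadd, add_sub_cancel_right]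
  have hcoeff₂ : luckySum q 1 - lam1 * luckySum q 0 = lam2 := by
    rw [luckySum_one, luckySum_zero, mul_one, ← hadd, add_sub_cancel_left]
  have hne : lam1 ≠ lam2 := sub_ne_zero.mp (hsub ▸ hs₀)
  simpa only [hcoeff₁, hcoeff₂] using hasSum_egf_of_recurrence hne hrec x

/-- Fix `q > 0` and set `λ₁ = (q + √(q² + 4q))/2`,
`λ₂ = (q − √(q² + 4q))/2`. For every real `x`, the series
`∑_{n≥0} Sₙ(q)·xⁿ/n!`, where `Sₙ(q) = ∑_{k=0}^n C(k, n−k)·qᵏ`, converges and equals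
`(λ₁·e^{λ₁x} − λ₂·e^{λ₂x})/(λ₁ − λ₂)`. -/
theorem egf_weakly_increasing_unit_fubini_lucky (q : ℝ) (hq : 0 < q) (x : ℝ)
    (lam1 lam2 : ℝ)
    (h1 : lam1 = (q + Real.sqrt (q ^ 2 + 4 * q)) / 2)
    (h2 : lam2 = (q - Real.sqrt (q ^ 2 + 4 * q)) / 2) :
    HasSum
      (fun n : ℕ =>
        (∑ k ∈ Finset.range (n + 1), (Nat.choose k (n - k) : ℝ) * q ^ k)
          * x ^ n / (Nat.factorial n))
      ((lam1 * Real.exp (lam1 * x) - lam2 * Real.exp (lam2 * x)) / (lam1 - lam2)) := by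
  have hpos : 0 < q ^ 2 + 4 * q := by positivity
  rw [Real.exp_eq_exp_ℝ]
  exact egf_weakly_increasing_unit_fubini_lucky_general (Real.sq_sqrt hpos.le)
    (Real.sqrt_pos.mpr hpos).ne' h1 h2 x
end
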